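/- The number of snakes of type B_n equals the n-th coefficient of the exponential generating function 1/(cos x - sin x); that is, if b_n denotes the number of sequences (x_1,...,x_n) of integers with 1 ≤ |x_i| ≤ n, x_i ≠ ±x_j for i ≠ j, and 0 < x_1 > x_2 < x_3 > ..., then ∑ b_n x^n/n! = 1/(cos x - sin x). -/

import Mathlib

/-- A snake of type `B_n`: a sequence of integers `x_1, …, x_n` (indexed here by
`Fin n`, so `x ⟨0⟩` is `x_1`) with `1 ≤ |x_i| ≤ n`, `x_i ≠ ±x_j` for `i ≠ j`,
and `0 < x_1 > x_2 < x_3 > ⋯` alternating. -/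
def IsTypeBSnake (n : ℕ) (x : Fin n → ℤ) : Prop :=
  (∀ i, 1 ≤ |x i| ∧ |x i| ≤ (n : ℤ)) ∧
  (∀ i j, i ≠ j → x i ≠ x j ∧ x i ≠ -x j) ∧
  (∀ h : 0 < n, 0 < x ⟨0, h⟩) ∧
  (∀ i : ℕ, ∀ h : i + 1 < n,
    (Even i → x ⟨i + 1, h⟩ < x ⟨i, Nat.lt_of_succ_lt h⟩) ∧
    (¬ Even i → x ⟨i, Nat.lt_of_succ_lt h⟩ < x ⟨i + 1, h⟩))

/-- The `n`-th Springer number: the number of snakes of type `B_n`. -/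
noncomputable def springer (n : ℕ) : ℕ := Nat.card {x : Fin n → ℤ // IsTypeBSnake n x}

open Finset

/-- The number of sequences `z_1, …, z_n` of integers whose absolute values are distinct elements
of the set `S` of positive integers, with `0 < t + z_1` and `0 < z_i + z_{i+1}` for all `i`,
computed by splitting off the first entry. -/
def snakeCount : ℕ → Finset ℤ → ℤ → ℤ
  | 0, _, _ => 1
  | n + 1, S, t => ∑ a ∈ S, ((if 0 < t + a then snakeCount n (S.erase a) a else 0) +
      (if 0 < t - a then snakeCount n (S.erase a) (-a) else 0))

/-- The sequences counted by `snakeCount`. -/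
def IsSnakeFrom (n : ℕ) (S : Finset ℤ) (t : ℤ) (z : Fin n → ℤ) : Prop :=
  (∀ i, |z i| ∈ S) ∧ (∀ i j, i ≠ j → |z i| ≠ |z j|) ∧
  ∀ i : Fin n, 0 < (Fin.cons t z : Fin (n + 1) → ℤ) i.castSucc + z i

lemma isSnakeFrom_succ_iff {n : ℕ} {S : Finset ℤ} {t : ℤ} {z : Fin (n + 1) → ℤ} :
    IsSnakeFrom (n + 1) S t z ↔
      (|z 0| ∈ S ∧ 0 < t + z 0) ∧ IsSnakeFrom n (S.erase |z 0|) (z 0) (Fin.tail z) := by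
  have hz : (Fin.cons (z 0) (Fin.tail z) : Fin (n + 1) → ℤ) = z := Fin.cons_self_tail z
  unfold IsSnakeFrom
  rw [hz]
  simp only [Fin.forall_fin_succ, Fin.tail, mem_erase, ← Fin.succ_castSucc, Fin.cons_succ,
    Fin.castSucc_zero, Fin.cons_zero]
  constructor
  · rintro ⟨⟨h1, h2⟩, ⟨h3, h4⟩, h5, h6⟩
    refine ⟨⟨h1, h5⟩, fun i => ⟨(h4 i).1 (Fin.succ_ne_zero i), h2 i⟩, fun i j hij => ?_, h6⟩
    exact (h4 i).2 j (fun h => hij (Fin.succ_injective _ h))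
  · rintro ⟨⟨h1, h5⟩, h2, h4, h6⟩
    refine ⟨⟨h1, fun i => (h2 i).2⟩, ⟨⟨fun h => absurd rfl h, fun i _ => (h2 i).1.symm⟩,
      fun i => ⟨fun _ => (h2 i).1, fun j hij => h4 i j (fun h => hij (h ▸ rfl))⟩⟩, h5, h6⟩

/-- Splitting a sequence into its first entry and the rest. -/
def isSnakeFromSuccEquiv (n : ℕ) (S : Finset ℤ) (t : ℤ) :
    {z : Fin (n + 1) → ℤ // IsSnakeFrom (n + 1) S t z} ≃
      Σ y : {y : ℤ // |y| ∈ S ∧ 0 < t + y},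
        {w : Fin n → ℤ // IsSnakeFrom n (S.erase |y.1|) y.1 w} where
  toFun z := ⟨⟨z.1 0, (isSnakeFrom_succ_iff.1 z.2).1⟩, ⟨Fin.tail z.1, (isSnakeFrom_succ_iff.1 z.2).2⟩⟩
  invFun p := ⟨Fin.cons p.1.1 p.2.1, isSnakeFrom_succ_iff.2 ⟨by simpa using p.1.2, by
    simpa using p.2.2⟩⟩
  left_inv z := by simp
  right_inv p := by
    rcases p with ⟨⟨y, hy⟩, ⟨w, hw⟩⟩
    rfl

lemma mem_signed_filter_iff {S : Finset ℤ} (hS : ∀ a ∈ S, 0 < a) (t y : ℤ) :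
    y ∈ (S ∪ S.image Neg.neg).filter (fun y => 0 < t + y) ↔ |y| ∈ S ∧ 0 < t + y := by
  simp only [mem_filter, mem_union, mem_image, and_congr_left_iff]
  intro _
  constructor
  · rintro (h | ⟨a, h, rfl⟩)
    · rwa [abs_of_pos (hS y h)]
    · rwa [abs_neg, abs_of_pos (hS a h)]
  · intro h
    rcases abs_choice y with h' | h'
    · exact Or.inl (h' ▸ h)
    · exact Or.inr ⟨-y, h' ▸ h, neg_neg y⟩

lemma finite_and_card_isSnakeFrom (n : ℕ) : ∀ (S : Finset ℤ) (_ : ∀ a ∈ S, 0 < a) (t : ℤ),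
    Finite {z : Fin n → ℤ // IsSnakeFrom n S t z} ∧
      (Nat.card {z : Fin n → ℤ // IsSnakeFrom n S t z} : ℤ) = snakeCount n S t := by
  induction n with
  | zero =>
    intro S _ t
    have : Unique {z : Fin 0 → ℤ // IsSnakeFrom 0 S t z} :=
      { default := ⟨Fin.elim0, fun i => i.elim0, fun i => i.elim0, fun i => i.elim0⟩
        uniq := fun z => Subtype.ext (Subsingleton.elim _ _) }
    exact ⟨inferInstance, by simp [snakeCount]⟩
  | succ n ih =>
    intro S hS t
    have hE : ∀ b, ∀ a ∈ S.erase b, 0 < a := fun b a ha => hS a (mem_of_mem_erase ha)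
    let D := (S ∪ S.image Neg.neg).filter (fun y => 0 < t + y)
    have hD : ∀ y, y ∈ D ↔ |y| ∈ S ∧ 0 < t + y := mem_signed_filter_iff hS t
    let _ : Fintype {y : ℤ // |y| ∈ S ∧ 0 < t + y} := Fintype.subtype D hD
    have : ∀ y : {y : ℤ // |y| ∈ S ∧ 0 < t + y},
        Finite {w : Fin n → ℤ // IsSnakeFrom n (S.erase |y.1|) y.1 w} :=
      fun y => (ih _ (hE _) _).1
    refine ⟨Finite.of_equiv _ (isSnakeFromSuccEquiv n S t).symm, ?_⟩
    rw [Nat.card_congr (isSnakeFromSuccEquiv n S t), Nat.card_sigma]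
    push_cast
    rw [Finset.sum_congr rfl (fun y _ => (ih _ (hE _) _).2),
      ← Finset.sum_subtype D hD (fun y => snakeCount n (S.erase |y|) y)]
    have hdisj : Disjoint S (S.image Neg.neg) := by
      rw [Finset.disjoint_left]
      intro a ha hna
      obtain ⟨b, hb, rfl⟩ := mem_image.1 hna
      have := hS b hb
      have := hS _ ha
      omega
    rw [Finset.sum_filter, Finset.sum_union hdisj,
      Finset.sum_image (fun a _ b _ h => neg_injective h), ← Finset.sum_add_distrib, snakeCount]
    refine Finset.sum_congr rfl fun a ha => ?_
    rw [abs_neg, abs_of_pos (hS a ha), ← sub_eq_add_neg]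

/-- Flipping the sign of every other entry. -/
def alternateSigns (n : ℕ) : (Fin n → ℤ) ≃ (Fin n → ℤ) :=
  Function.Involutive.toPerm (fun x i => (-1) ^ (i : ℕ) * x i) fun x => by
    ext i
    simp only [← mul_assoc, ← mul_pow]
    simp

lemma alternateSigns_apply (n : ℕ) (x : Fin n → ℤ) (i : Fin n) :
    alternateSigns n x i = (-1) ^ (i : ℕ) * x i := rfl

lemma isTypeBSnake_iff_isSnakeFrom (n : ℕ) (x : Fin n → ℤ) :
    IsTypeBSnake n x ↔ IsSnakeFrom n (Icc 1 (n : ℤ)) 0 (alternateSigns n x) := by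
  have habs : ∀ i, |alternateSigns n x i| = |x i| := fun i => by
    simp [alternateSigns_apply, abs_mul, abs_pow]
  unfold IsTypeBSnake IsSnakeFrom
  simp only [habs, mem_Icc]
  refine and_congr Iff.rfl (and_congr ?_ ?_)
  · refine forall₃_congr fun i j _ => ?_
    rw [Ne, Ne, Ne, abs_eq_abs, not_or]
  · cases n with
    | zero => simp
    | succ n =>
      rw [Fin.forall_fin_succ]
      refine and_congr ?_ ?_
      · simp [alternateSigns_apply]
      · simp only [Fin.forall_iff, ← Fin.succ_castSucc, Fin.cons_succ]
        refine forall_congr' fun i => ⟨fun h hi => ?_, fun h hi => ?_⟩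
        · have h := h (by omega)
          rcases Nat.even_or_odd i with he | ho
          · have := h.1 he
            simp [alternateSigns_apply, pow_succ, he.neg_one_pow] at this ⊢
            omega
          · have := h.2 (Nat.not_even_iff_odd.2 ho)
            simp [alternateSigns_apply, pow_succ, ho.neg_one_pow] at this ⊢
            omega
        · have h := h (by omega)
          rcases Nat.even_or_odd i with he | ho
          · simp [alternateSigns_apply, pow_succ, he, he.neg_one_pow] at h ⊢
            omega
          · have := Nat.not_even_iff_odd.2 ho
            simp [alternateSigns_apply, pow_succ, this, ho.neg_one_pow] at h ⊢
            omega

lemma springer_eq_snakeCount (n : ℕ) : (springer n : ℤ) = snakeCount n (Icc 1 (n : ℤ)) 0 := by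
  rw [← (finite_and_card_isSnakeFrom n (Icc 1 (n : ℤ))
    (fun a ha => by have := (mem_Icc.1 ha).1; omega) 0).2, springer,
    Nat.card_congr ((alternateSigns n).subtypeEquiv (isTypeBSnake_iff_isSnakeFrom n))]

/-- The Taylor coefficients of `cos + s sin` for `s = ±1`. -/
def cosSinCoeff : ℤ → ℕ → ℤ
  | _, 0 => 1
  | s, k + 1 => s * cosSinCoeff (-s) k

lemma sum_powerset_eq_sum_max (U : Finset ℤ) (h : Finset ℤ → ℤ) :
    ∑ T ∈ U.powerset, h T =
      h ∅ + ∑ a ∈ U, ∑ T ∈ (U.filter (· < a)).powerset, h (insert a T) := by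
  induction U using Finset.induction_on_max with
  | empty => simp
  | insert m U hm ih =>
    have hmU : m ∉ U := fun h => lt_irrefl _ (hm m h)
    have h1 : (insert m U).filter (· < m) = U := by
      rw [filter_insert, if_neg (lt_irrefl m), filter_true_of_mem hm]
    have h2 : ∀ a ∈ U, (insert m U).filter (· < a) = U.filter (· < a) := fun a ha => by
      rw [filter_insert, if_neg (hm a ha).not_gt]
    rw [sum_powerset_insert hmU, ih, sum_insert hmU, h1,
      Finset.sum_congr rfl (fun a ha => by rw [← h2 a ha])]
    ring

lemma snakeCount_succ_eq (n : ℕ) {S : Finset ℤ} (hS : ∀ a ∈ S, 0 < a) {s t : ℤ}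
    (hs : s = 1 ∨ s = -1) (ht : 0 < t) (htS : t ∉ S) :
    snakeCount (n + 1) S (s * t) = snakeCount (n + 1) S 0 +
      s * ∑ a ∈ S.filter (· < t), snakeCount n (S.erase a) (-s * a) := by
  rw [snakeCount, snakeCount, sum_filter, mul_sum, ← sum_add_distrib]
  refine sum_congr rfl fun a ha => ?_
  have ha0 := hS a ha
  have hat : a ≠ t := fun h => htS (h ▸ ha)
  rw [if_pos (by omega : 0 < 0 + a), if_neg (by omega : ¬ 0 < 0 - a)]
  rcases hs with rfl | rfl
  · rw [if_pos (by omega : 0 < 1 * t + a)]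
    by_cases h : a < t
    · rw [if_pos (by omega), if_pos h]; simp
    · rw [if_neg (by omega), if_neg h]; simp
  · rw [if_neg (by omega : ¬ 0 < -1 * t - a)]
    by_cases h : a < t
    · rw [if_neg (by omega), if_pos h]; simp
    · rw [if_pos (by omega), if_neg h]; simp

lemma snakeCount_eq_sum_powerset (n : ℕ) : ∀ (S : Finset ℤ) (_ : ∀ a ∈ S, 0 < a) (_ : #S = n)
    (s t : ℤ) (_ : s = 1 ∨ s = -1) (_ : 0 < t) (_ : t ∉ S),
    snakeCount n S (s * t) = ∑ T ∈ (S.filter (· < t)).powerset,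
      cosSinCoeff s #T * snakeCount (n - #T) (S \ T) 0 := by
  induction n with
  | zero =>
    intro S _ hn s t _ _ _
    obtain rfl := card_eq_zero.1 hn
    simp [snakeCount, cosSinCoeff]
  | succ n ih =>
    intro S hS hn s t hs ht htS
    rw [snakeCount_succ_eq n hS hs ht htS, sum_powerset_eq_sum_max, mul_sum]
    simp only [card_empty, cosSinCoeff, one_mul, sdiff_empty, Nat.sub_zero, add_right_inj]
    refine sum_congr rfl fun a ha => ?_
    obtain ⟨haS, hat⟩ := mem_filter.1 ha
    rw [ih (S.erase a) (fun b hb => hS b (mem_of_mem_erase hb))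
      (by rw [card_erase_of_mem haS, hn]; rfl) (-s) a (by omega) (hS a haS) (notMem_erase a S),
      mul_sum]
    have hfil : (S.erase a).filter (· < a) = (S.filter (· < t)).filter (· < a) := by
      ext b
      simp only [mem_filter, mem_erase]
      constructor
      · rintro ⟨⟨_, h⟩, h'⟩; exact ⟨⟨h, h'.trans hat⟩, h'⟩
      · rintro ⟨⟨h, _⟩, h'⟩; exact ⟨⟨h'.ne, h⟩, h'⟩
    rw [hfil]
    refine sum_congr rfl fun T hT => ?_
    have haT : a ∉ T := fun h => lt_irrefl a (mem_filter.1 (mem_powerset.1 hT h)).2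
    have hsd : S \ insert a T = S.erase a \ T := by
      ext b; simp only [mem_sdiff, mem_insert, mem_erase]; tauto
    rw [card_insert_of_notMem haT, cosSinCoeff, hsd, Nat.add_sub_add_right, mul_assoc]

lemma sum_powerset_snakeCount_eq_zero (n : ℕ) (S : Finset ℤ) (hS : ∀ a ∈ S, 0 < a)
    (hn : #S = n + 1) :
    ∑ T ∈ S.powerset, cosSinCoeff (-1) #T * snakeCount (n + 1 - #T) (S \ T) 0 = 0 := by
  have hlt : ∀ a ∈ S, a < ∑ b ∈ S, b + 1 := fun a ha =>
    Int.lt_add_one_of_le (single_le_sum (fun b hb => (hS b hb).le) ha)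
  have hpos : 0 < ∑ b ∈ S, b + 1 := Int.lt_add_one_of_le (sum_nonneg fun b hb => (hS b hb).le)
  have h := snakeCount_eq_sum_powerset (n + 1) S hS hn (-1) _ (Or.inr rfl) hpos
    (fun h => lt_irrefl _ (hlt _ h))
  rw [filter_true_of_mem hlt] at h
  rw [← h, snakeCount]
  refine sum_eq_zero fun a ha => ?_
  have := hlt a ha
  have := hS a ha
  rw [if_neg (by omega), if_neg (by omega), add_zero]

/-- The recurrence saying that the exponential generating function of `b` is the inverse
of `cos - sin` determines the snake counts. -/
lemma snakeCount_eq_of_recurrence {b : ℕ → ℂ} (h0 : b 0 = 1)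
    (hb : ∀ n, ∑ k ∈ range (n + 2), ((n + 1).choose k : ℂ) * cosSinCoeff (-1) k * b (n + 1 - k) = 0)
    (n : ℕ) : ∀ (S : Finset ℤ) (_ : ∀ a ∈ S, 0 < a) (_ : #S = n), (snakeCount n S 0 : ℂ) = b n := by
  induction n using Nat.strong_induction_on with
  | _ n ih =>
    intro S hS hn
    cases n with
    | zero => simp [snakeCount, h0]
    | succ n =>
      have h1 := congrArg (Int.cast : ℤ → ℂ) (sum_powerset_snakeCount_eq_zero n S hS hn)
      have h2 := sum_powerset_apply_card
        (fun k => (cosSinCoeff (-1) k : ℂ) * b (n + 1 - k)) (x := S)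
      simp only [hn, nsmul_eq_mul, ← mul_assoc] at h2
      rw [hb n] at h2
      push_cast at h1
      rw [← add_sum_erase _ _ (empty_mem_powerset S)] at h1 h2
      have h3 : ∀ T ∈ S.powerset.erase ∅,
          (cosSinCoeff (-1) #T : ℂ) * (snakeCount (n + 1 - #T) (S \ T) 0 : ℂ) =
            cosSinCoeff (-1) #T * b (n + 1 - #T) := fun T hT => by
        obtain ⟨hT0, hTS⟩ := mem_erase.1 hT
        have hpos := card_pos.2 (nonempty_iff_ne_empty.2 hT0)
        rw [ih (n + 1 - #T) (by omega) (S \ T) (fun a ha => hS a (mem_sdiff.1 ha).1)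
          (by rw [card_sdiff_of_subset (mem_powerset.1 hTS), hn])]
      rw [sum_congr rfl h3] at h1
      simpa [cosSinCoeff] using add_right_cancel (h1.trans h2.symm)

lemma iteratedDeriv_cos_add_mul_sin (k : ℕ) : ∀ (s : ℤ) (_ : s = 1 ∨ s = -1),
    iteratedDeriv k (fun z : ℂ => Complex.cos z + s * Complex.sin z) 0 = cosSinCoeff s k := by
  induction k with
  | zero => simp [cosSinCoeff]
  | succ k ih =>
    intro s hs
    have hd : deriv (fun z : ℂ => Complex.cos z + s * Complex.sin z) =
        fun z => (s : ℂ) * (Complex.cos z + ((-s : ℤ) : ℂ) * Complex.sin z) := by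
      funext z
      have h := (Complex.hasDerivAt_cos z).add ((Complex.hasDerivAt_sin z).const_mul (s : ℂ))
      refine h.deriv.trans ?_
      rcases hs with rfl | rfl <;> push_cast <;> ring
    rw [iteratedDeriv_succ', hd, iteratedDeriv_const_mul_field, ih (-s) (by omega), cosSinCoeff]
    push_cast
    rfl

lemma cos_sub_sin_ne_zero {z : ℂ} (hz : ‖z‖ < Real.pi / 4) : Complex.cos z - Complex.sin z ≠ 0 := by
  intro h
  have hs : Complex.sin ((Real.pi / 4 : ℝ) - z) = 0 := by
    rw [Complex.sin_sub, ← Complex.ofReal_sin, ← Complex.ofReal_cos, Real.sin_pi_div_four,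
      Real.cos_pi_div_four, ← mul_sub, h, mul_zero]
  obtain ⟨k, hk⟩ := Complex.sin_eq_zero_iff.1 hs
  have hz' : z = ((Real.pi / 4 - k * Real.pi : ℝ) : ℂ) := by
    push_cast at hk ⊢
    linear_combination -hk
  rw [hz', Complex.norm_real, Real.norm_eq_abs, abs_lt] at hz
  have hpi := Real.pi_pos
  have h1 : (0 : ℝ) < k := by nlinarith
  have h2 : (k : ℝ) < 1 := by nlinarith
  have h1' : 0 < k := by exact_mod_cast h1
  have h2' : k < 1 := by exact_mod_cast h2
  omega

lemma differentiableOn_inv_cos_sub_sin :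
    DifferentiableOn ℂ (fun z : ℂ => (Complex.cos z - Complex.sin z)⁻¹)
      (Metric.ball 0 (Real.pi / 4)) :=
  (Complex.differentiable_cos.sub Complex.differentiable_sin).differentiableOn.inv fun _ hz =>
    cos_sub_sin_ne_zero (mem_ball_zero_iff.1 hz)

lemma iteratedDeriv_inv_cos_sub_sin_recurrence (n : ℕ) :
    ∑ k ∈ range (n + 2), ((n + 1).choose k : ℂ) * cosSinCoeff (-1) k *
      iteratedDeriv (n + 1 - k) (fun z : ℂ => (Complex.cos z - Complex.sin z)⁻¹) 0 = 0 := by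
  have hball : Metric.ball (0 : ℂ) (Real.pi / 4) ∈ nhds 0 :=
    Metric.ball_mem_nhds _ (by positivity)
  have hf : ContDiffAt ℂ (n + 1 : ℕ) (fun z : ℂ => (Complex.cos z - Complex.sin z)⁻¹) 0 :=
    (differentiableOn_inv_cos_sub_sin.analyticAt hball).contDiffAt
  have hg : ContDiffAt ℂ (n + 1 : ℕ)
      (fun z : ℂ => Complex.cos z + ((-1 : ℤ) : ℂ) * Complex.sin z) 0 :=
    (Complex.contDiff_cos.add (contDiff_const.mul Complex.contDiff_sin)).contDiffAt
  have hmul := iteratedDeriv_mul hg hf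
  have hone : ((fun z : ℂ => Complex.cos z + ((-1 : ℤ) : ℂ) * Complex.sin z) *
      fun z : ℂ => (Complex.cos z - Complex.sin z)⁻¹) =ᶠ[nhds 0] fun _ => 1 := by
    filter_upwards [hball] with z hz
    have := cos_sub_sin_ne_zero (mem_ball_zero_iff.1 hz)
    simp only [Pi.mul_apply]
    push_cast
    rw [neg_one_mul, ← sub_eq_add_neg, mul_inv_cancel₀ this]
  rw [hone.iteratedDeriv_eq, iteratedDeriv_const, if_neg (Nat.succ_ne_zero n)] at hmul
  refine Eq.trans ?_ hmul.symm
  exact sum_congr rfl fun k _ => by rw [iteratedDeriv_cos_add_mul_sin k _ (Or.inr rfl)]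

lemma iteratedDeriv_inv_cos_sub_sin (n : ℕ) :
    iteratedDeriv n (fun z : ℂ => (Complex.cos z - Complex.sin z)⁻¹) 0 = springer n := by
  rw [← snakeCount_eq_of_recurrence
      (b := fun n => iteratedDeriv n (fun z : ℂ => (Complex.cos z - Complex.sin z)⁻¹) 0)
      (by simp) iteratedDeriv_inv_cos_sub_sin_recurrence n (Icc 1 (n : ℤ))
      (fun a ha => by have := (mem_Icc.1 ha).1; omega) (by simp),
    ← springer_eq_snakeCount, Int.cast_natCast]

/-- The exponential generating function of the Springer numbers (the numbers of
type-`B` snakes) is `1/(cos x - sin x)`:  `∑ b_n x^n/n! = 1/(cos x - sin x)`. -/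
theorem springer_egf (x : ℝ) (hx : |x| < Real.pi / 4) :
    HasSum (fun n : ℕ => (springer n : ℝ) * x ^ n / (n.factorial : ℝ))
      (1 / (Real.cos x - Real.sin x)) := by
  have h := Complex.hasSum_taylorSeries_on_ball differentiableOn_inv_cos_sub_sin
    (z := (x : ℂ)) (by simpa using hx)
  rw [← Complex.hasSum_ofReal]
  refine (congrArg₂ (fun (f : ℕ → ℂ) a => HasSum f a) ?_ ?_).mpr h
  · funext n
    rw [iteratedDeriv_inv_cos_sub_sin, smul_eq_mul, smul_eq_mul]
    push_cast
    ring
  · push_cast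
    rw [one_div]
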